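/- Let X be a complex Banach space with X ≠ {0} and let L : X → X be a surjective linear isometry (an invertible bounded linear operator with ‖L(x)‖ = ‖x‖ for all x ∈ X). Then L does not have the shadowing property. -/

import Mathlib

/-!
Let `f` be an isometric bijection. The substitution `x n = (f ^ n) (y n)` turns pseudo-orbits of the
identity into pseudo-orbits of `f` and preserves shadowing, so `f` has the shadowing property if and
only if the identity has it. A sequence is shadowed by an orbit of the identity only if it is
bounded, whereas `n ↦ n • w` with `‖w‖ = δ` is an unbounded `δ`-pseudo-orbit of the identity.
-/

open Filter Topology

variable {X : Type*} [NormedAddCommGroup X] [NormedSpace ℂ X] [CompleteSpace X]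

/-- `L` has the shadowing property. -/
def ShadowingProperty (L : X ≃L[ℂ] X) : Prop :=
  ∀ ε > (0 : ℝ), ∃ δ > (0 : ℝ), ∀ x : ℤ → X,
    (∀ n : ℤ, ‖L (x n) - x (n + 1)‖ ≤ δ) →
    ∃ p : X, ∀ n : ℤ, ‖(L ^ n) p - x n‖ ≤ ε

section Metric

variable {M : Type*} [PseudoMetricSpace M]

/-- A two-sided `δ`-pseudo-orbit of the bijection `f`: each term is mapped `δ`-close to the next. -/
def IsPseudoOrbit (f : Equiv.Perm M) (δ : ℝ) (x : ℤ → M) : Prop :=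
  ∀ n, dist (f (x n)) (x (n + 1)) ≤ δ

/-- The two-sided orbit of `p` under `f` stays `ε`-close to the sequence `x`. -/
def Shadows (f : Equiv.Perm M) (ε : ℝ) (p : M) (x : ℤ → M) : Prop :=
  ∀ n, dist ((f ^ n) p) (x n) ≤ ε

/-- The two-sided shadowing property for a bijection of a pseudometric space, extending
`ShadowingProperty` to maps that need not be linear or continuous. -/
def HasShadowing (f : Equiv.Perm M) : Prop :=
  ∀ ε > (0 : ℝ), ∃ δ > (0 : ℝ), ∀ x, IsPseudoOrbit f δ x → ∃ p, Shadows f ε p x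

theorem isometry_perm_zpow {α : Type*} [PseudoEMetricSpace α] {f : Equiv.Perm α}
    (hf : Isometry f) (n : ℤ) : Isometry (f ^ n) := by
  refine zpow_induction_left (P := fun g : Equiv.Perm α ↦ Isometry g) isometry_id
    (fun _ hg ↦ hf.comp hg) (fun _ hg ↦ ?_) n
  exact (hf.right_inv f.apply_symm_apply).comp hg

theorem isPseudoOrbit_zpow_apply_iff {f : Equiv.Perm M} (hf : Isometry f) {δ : ℝ} {y : ℤ → M} :
    IsPseudoOrbit f δ (fun n ↦ (f ^ n) (y n)) ↔ IsPseudoOrbit 1 δ y := by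
  refine forall_congr' fun n ↦ ?_
  rw [← Equiv.Perm.mul_apply, ← zpow_one_add, add_comm 1 n,
    (isometry_perm_zpow hf (n + 1)).dist_eq, Equiv.Perm.one_apply]

theorem shadows_zpow_apply_iff {f : Equiv.Perm M} (hf : Isometry f) {ε : ℝ} {p : M} {y : ℤ → M} :
    Shadows f ε p (fun n ↦ (f ^ n) (y n)) ↔ Shadows 1 ε p y := by
  refine forall_congr' fun n ↦ ?_
  rw [(isometry_perm_zpow hf n).dist_eq, one_zpow, Equiv.Perm.one_apply]

theorem hasShadowing_iff_hasShadowing_one {f : Equiv.Perm M} (hf : Isometry f) :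
    HasShadowing f ↔ HasShadowing (1 : Equiv.Perm M) := by
  have untwist (ε δ : ℝ) :
      (∀ x, IsPseudoOrbit f δ x → ∃ p, Shadows f ε p x) ↔
        ∀ y, IsPseudoOrbit (1 : Equiv.Perm M) δ y → ∃ p, Shadows 1 ε p y := by
    rw [← (Equiv.piCongrRight fun n : ℤ ↦ f ^ n).forall_congr_right]
    exact forall_congr' fun y ↦ imp_congr (isPseudoOrbit_zpow_apply_iff hf)
      (exists_congr fun p ↦ shadows_zpow_apply_iff hf)
  simp only [HasShadowing, untwist]

end Metric

section Normed

variable {E : Type*} [SeminormedAddCommGroup E]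

theorem isPseudoOrbit_one_zsmul (w : E) : IsPseudoOrbit 1 ‖w‖ (fun n ↦ n • w) := by
  intro n
  simp [add_zsmul]

theorem not_shadows_one_zsmul [NormedSpace ℝ E] {w : E} (hw : 0 < ‖w‖) (ε : ℝ) (p : E) :
    ¬ Shadows 1 ε p (fun n ↦ n • w) := by
  intro hp
  have dist_le (n : ℤ) : dist p (n • w) ≤ ε := by
    simpa only [one_zpow, Equiv.Perm.one_apply] using hp n
  obtain ⟨N, hN⟩ := exists_nat_gt ((ε + ε) / ‖w‖)
  refine ((div_lt_iff₀ hw).mp hN).not_ge ?_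
  calc
    N * ‖w‖ = dist ((0 : ℤ) • w) ((N : ℤ) • w) := by
      rw [zero_smul, dist_zero_left, norm_zsmul ℝ, Int.cast_natCast, Real.norm_natCast]
    _ ≤ dist p ((0 : ℤ) • w) + dist p ((N : ℤ) • w) := dist_triangle_left _ _ p
    _ ≤ ε + ε := add_le_add (dist_le 0) (dist_le N)

theorem not_hasShadowing_one [NormedSpace ℝ E] [NontrivialTopology E] :
    ¬ HasShadowing (1 : Equiv.Perm E) := by
  intro h
  obtain ⟨δ, hδ, shadow⟩ := h 1 one_pos
  obtain ⟨w, rfl⟩ := exists_norm_eq E hδ.le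
  obtain ⟨p, hp⟩ := shadow _ (isPseudoOrbit_one_zsmul w)
  exact not_shadows_one_zsmul hδ 1 p hp

theorem isometry_not_shadowing_general [NormedSpace ℝ E] [NontrivialTopology E]
    {f : Equiv.Perm E} (hf : Isometry f) : ¬ HasShadowing f :=
  (hasShadowing_iff_hasShadowing_one hf).not.mpr not_hasShadowing_one

end Normed

theorem continuousLinearEquiv_toEquiv_zpow {R V : Type*} [Semiring R] [TopologicalSpace V]
    [AddCommMonoid V] [Module R V] (L : V ≃L[R] V) (n : ℤ) :
    (L ^ n).toEquiv = (L.toEquiv : Equiv.Perm V) ^ n :=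
  let toPerm : (V ≃L[R] V) →* Equiv.Perm V :=
    { toFun := fun L ↦ L.toEquiv, map_one' := rfl, map_mul' := fun _ _ ↦ rfl }
  map_zpow toPerm L n

theorem hasShadowing_toEquiv_iff {E : Type*} [NormedAddCommGroup E] [NormedSpace ℂ E]
    (L : E ≃L[ℂ] E) : HasShadowing L.toEquiv ↔ ShadowingProperty L := by
  simp only [HasShadowing, IsPseudoOrbit, Shadows, ShadowingProperty,
    ← continuousLinearEquiv_toEquiv_zpow, dist_eq_norm,
    LinearEquiv.coe_toEquiv, ContinuousLinearEquiv.coe_toLinearEquiv]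

/-- A surjective linear isometry of a nonzero Banach space does not have the
shadowing property. -/
theorem isometry_not_shadowing [Nontrivial X] (L : X ≃L[ℂ] X)
    (hiso : ∀ x : X, ‖L x‖ = ‖x‖) : ¬ ShadowingProperty L := by
  rw [← hasShadowing_toEquiv_iff]
  exact isometry_not_shadowing_general (AddMonoidHomClass.isometry_of_norm L hiso)
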